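/- Let K and p be integers with K − 1 > p ≥ 1, let Z be a (K−1) × p random matrix whose entries are independent standard normal random variables, let W = (1/(K−1)) Zᵀ Z (a central Wishart matrix distributed as (1/(K−1)) W_p(K−1, I_p)), and let B = diag(b_1, …, b_p) be a positive definite diagonal matrix (each b_i > 0). Then E[log det(B + W⁻¹)] ≥ inf { Σ_{i=1}^{p} log(b_i + 1/x_i) : x ∈ ℝ^p, Σ_{i=1}^{p} x_i = p, and for every i, (1 − √(p/(K−1)))² ≤ x_i ≤ (1 + √(p/(K−1)))² + 1/(K−1) }. -/

import Mathlib

open MeasureTheory ProbabilityTheory Matrix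

/-- Extended-valued negative part of `log |x|`. -/
noncomputable def negLog (x : ℝ) : ENNReal := if x = 0 then ⊤ else ENNReal.ofReal (-Real.log x)

lemma measurable_negLog : Measurable negLog := by
  unfold negLog
  refine Measurable.ite (measurableSet_singleton 0) measurable_const ?_
  fun_prop

lemma negLog_mul_le (x y : ℝ) : negLog (x * y) ≤ negLog x + negLog y := by
  unfold negLog
  by_cases hx : x = 0
  · simp [hx]
  by_cases hy : y = 0
  · simp [hy]
  simp only [hx, hy, mul_eq_zero, or_self, if_false]
  rw [Real.log_mul hx hy, neg_add]
  exact ENNReal.ofReal_add_le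

lemma lintegral_negLog_lt_top : ∫⁻ x, negLog x < ⊤ := by
  have h1 : ∫⁻ x, negLog x ≤ ∫⁻ x in Set.Ioc (-1 : ℝ) 1, ‖Real.log x‖ₑ := by
    rw [← lintegral_indicator measurableSet_Ioc]
    apply lintegral_mono_ae
    have h0 : ∀ᵐ x : ℝ, x ≠ 0 := by simp [ae_iff]
    have h0' : ∀ᵐ x : ℝ, x ≠ -1 := by simp [ae_iff]
    filter_upwards [h0, h0'] with x hx hx1
    simp only [negLog, hx, if_false]
    by_cases hm : x ∈ Set.Ioc (-1 : ℝ) 1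
    · rw [Set.indicator_of_mem hm, Real.enorm_eq_ofReal_abs]
      exact ENNReal.ofReal_le_ofReal (neg_le_abs _)
    · rw [Set.indicator_of_notMem hm]
      simp only [nonpos_iff_eq_zero, ENNReal.ofReal_eq_zero, Left.neg_nonpos_iff]
      rw [← Real.log_abs]
      apply Real.log_nonneg
      by_contra hlt
      push Not at hlt
      rw [abs_lt] at hlt
      exact hm ⟨hlt.1, hlt.2.le⟩
  refine h1.trans_lt ?_
  have := (intervalIntegral.intervalIntegrable_log' (a := -1) (b := 1)).1
  exact this.2

lemma gaussian_le_volume : gaussianReal 0 1 ≤ (volume : Measure ℝ) := by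
  rw [gaussianReal_of_var_ne_zero 0 one_ne_zero]
  calc _ ≤ volume.withDensity (fun _ : ℝ => (1 : ENNReal)) := by
        apply withDensity_mono
        refine Filter.Eventually.of_forall fun x => ?_
        simp only [gaussianPDF]
        rw [ENNReal.ofReal_le_one, gaussianPDFReal]
        simp only [NNReal.coe_one, mul_one, sub_zero]
        have h1 : Real.exp (-x ^ 2 / 2) ≤ 1 := by
          apply Real.exp_le_one_iff.2; nlinarith [sq_nonneg x]
        have h2 : (Real.sqrt (2 * Real.pi))⁻¹ ≤ 1 := by
          apply inv_le_one_of_one_le₀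
          rw [Real.one_le_sqrt]
          nlinarith [Real.pi_gt_three]
        exact mul_le_one₀ h2 (Real.exp_nonneg _) h1
    _ = volume := by simp

lemma lintegral_gaussian_negLog_le (a c : ℝ) :
    ∫⁻ t, negLog (t * a + c) ∂(gaussianReal 0 1) ≤ negLog a + ∫⁻ x, negLog x := by
  by_cases ha : a = 0
  · simp [negLog, ha]
  calc ∫⁻ t, negLog (t * a + c) ∂(gaussianReal 0 1)
      ≤ ∫⁻ t, (negLog a + negLog (t + c / a)) ∂(gaussianReal 0 1) := by
        apply lintegral_mono
        intro t
        have : t * a + c = a * (t + c / a) := by field_simp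
        simp only [this]
        exact negLog_mul_le _ _
    _ = negLog a + ∫⁻ t, negLog (t + c / a) ∂(gaussianReal 0 1) := by
        rw [lintegral_add_left measurable_const]; simp
    _ ≤ negLog a + ∫⁻ t, negLog (t + c / a) := by
        gcongr; exact gaussian_le_volume
    _ = _ := by rw [lintegral_add_right_eq_self (μ := volume) negLog (c / a)]

lemma lintegral_minor {m p : ℕ} (k : ℕ) (r : Fin k → Fin m) (c : Fin k → Fin p)
    (hr : Function.Injective r) (hc : Function.Injective c) :
    ∫⁻ x : Fin m × Fin p → ℝ, negLog (Matrix.det (Matrix.of fun i j => x (r i, c j)))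
      ∂(Measure.pi fun _ => gaussianReal 0 1) < ⊤ := by
  induction k with
  | zero => simp [negLog]
  | succ k ih =>
    have ih' := ih (r ∘ Fin.succ) (c ∘ Fin.succ) (hr.comp (Fin.succ_injective _))
      (hc.comp (Fin.succ_injective _))
    have meas : ∀ (k : ℕ) (r : Fin k → Fin m) (c : Fin k → Fin p),
        Measurable fun x : Fin m × Fin p → ℝ =>
          negLog (Matrix.det (Matrix.of fun i j => x (r i, c j))) := by
      intro k r c
      apply measurable_negLog.comp
      apply Continuous.measurable
      apply Continuous.matrix_det
      fun_prop
    refine lt_of_le_of_lt (lintegral_le_of_lmarginal_le (g := fun x => negLog (Matrix.det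
      (Matrix.of fun i j => x ((r ∘ Fin.succ) i, (c ∘ Fin.succ) j))) + ∫⁻ x, negLog x)
      {(r 0, c 0)} (meas _ _ _) ((meas _ _ _).add_const _) ?_) ?_
    · rw [lmarginal_singleton, lmarginal_singleton]
      intro x
      have ha : ∀ t, (Matrix.of fun i j => (Function.update x (r 0, c 0) t)
          ((r ∘ Fin.succ) i, (c ∘ Fin.succ) j)) =
          Matrix.of fun i j => x ((r ∘ Fin.succ) i, (c ∘ Fin.succ) j) := by
        intro t
        ext i j
        simp only [Matrix.of_apply]
        rw [Function.update_of_ne]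
        simp [hr.eq_iff]
      simp only [ha]
      obtain ⟨d, hd⟩ : ∃ d : ℝ, ∀ t, (Matrix.of fun i j =>
          (Function.update x (r 0, c 0) t) (r i, c j)).det =
          t * (Matrix.of fun i j => x ((r ∘ Fin.succ) i, (c ∘ Fin.succ) j)).det + d := by
        refine ⟨∑ j : Fin k, (-1) ^ ((j.succ : Fin (k+1)) : ℕ) * x (r 0, c j.succ) *
          ((Matrix.of fun i j => x (r i, c j)).submatrix Fin.succ (Fin.succAbove j.succ)).det, ?_⟩
        intro t
        rw [Matrix.det_succ_row_zero, Fin.sum_univ_succ]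
        congr 1
        · simp only [Fin.val_zero, pow_zero, one_mul, Matrix.of_apply, Function.update_self]
          rw [← ha t]
          rfl
        · refine Finset.sum_congr rfl fun j _ => ?_
          congr 2
          · simp only [Matrix.of_apply]
            rw [Function.update_of_ne]
            simp [hc.eq_iff]
          · ext i l
            simp only [Matrix.submatrix_apply, Matrix.of_apply]
            rw [Function.update_of_ne]
            simp [hr.eq_iff]
      simp only [hd]
      refine (lintegral_gaussian_negLog_le _ _).trans ?_
      simp
    · rw [lintegral_add_right _ measurable_const]
      simp only [lintegral_const, measure_univ, mul_one]
      exact ENNReal.add_lt_top.2 ⟨ih', lintegral_negLog_lt_top⟩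

lemma log_det_le_trace {p : ℕ} {M : Matrix (Fin p) (Fin p) ℝ} (hM : M.PosDef) :
    Real.log M.det ≤ M.trace - p := by
  rw [hM.1.det_eq_prod_eigenvalues, hM.1.trace_eq_sum_eigenvalues]
  simp only [RCLike.ofReal_real_eq_id, id_eq]
  rw [Real.log_prod (fun i _ => (hM.eigenvalues_pos i).ne')]
  calc _ ≤ ∑ i, (hM.1.eigenvalues i - 1) :=
        Finset.sum_le_sum fun i _ => Real.log_le_sub_one_of_pos (hM.eigenvalues_pos i)
    _ = _ := by simp

lemma one_le_det_one_add {p : ℕ} {C : Matrix (Fin p) (Fin p) ℝ} (hC : C.PosSemidef) :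
    1 ≤ (1 + C).det := by
  have hpd : (1 + C).PosDef := Matrix.PosDef.one.add_posSemidef hC
  have h2 := log_det_le_trace hpd.inv
  have htr : ((1 + C)⁻¹).trace ≤ p := by
    have hu : IsUnit (1 + C).det := hpd.det_pos.ne'.isUnit
    have h3 : (((1 + C)⁻¹)ᴴ * C * (1 + C)⁻¹ + (((1 + C)⁻¹)ᴴ * Cᴴ * C * (1 + C)⁻¹)).PosSemidef := by
      refine (hC.conjTranspose_mul_mul_same _).add ?_
      have := Matrix.posSemidef_conjTranspose_mul_self (C * (1 + C)⁻¹)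
      rwa [Matrix.conjTranspose_mul, ← Matrix.mul_assoc] at this
    have h4 := h3.trace_nonneg
    rw [hpd.inv.1.eq, hC.1.eq] at h4
    have e : (1 + C)⁻¹ * C * (1 + C)⁻¹ + (1 + C)⁻¹ * C * C * (1 + C)⁻¹ = 1 - (1 + C)⁻¹ := by
      have e1 : (1 + C)⁻¹ * C * (1 + C)⁻¹ + (1 + C)⁻¹ * C * C * (1 + C)⁻¹
        = (1 + C)⁻¹ * C * ((1 + C) * (1 + C)⁻¹) := by noncomm_ring
      rw [e1, Matrix.mul_nonsing_inv _ hu, mul_one]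
      have e2 : (1 + C)⁻¹ * C = (1 + C)⁻¹ * (1 + C) - (1 + C)⁻¹ := by noncomm_ring
      rw [e2, Matrix.nonsing_inv_mul _ hu]
    rw [e, Matrix.trace_sub, Matrix.trace_one] at h4
    simp at h4
    linarith
  rw [Matrix.det_nonsing_inv, Ring.inverse_eq_inv', Real.log_inv] at h2
  have h5 : 0 ≤ Real.log (1 + C).det := by linarith
  by_contra hlt
  push Not at hlt
  linarith [Real.log_neg hpd.det_pos hlt]

lemma det_sq_le_det_gram {p r : ℕ} (Z : Matrix (Fin (p + r)) (Fin p) ℝ) :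
    (Z.submatrix (Fin.castAdd r) id).det ^ 2 ≤ (Zᵀ * Z).det := by
  set Z1 := Z.submatrix (Fin.castAdd r) id
  set Z2 := Z.submatrix (Fin.natAdd p) id
  have hdec : Zᵀ * Z = Z1ᵀ * Z1 + Z2ᵀ * Z2 := by
    ext i j
    simp [Matrix.mul_apply, Fin.sum_univ_add, Z1, Z2]
  by_cases h0 : Z1.det = 0
  · rw [h0]
    simpa using (Matrix.posSemidef_conjTranspose_mul_self Z).det_nonneg
  have hu : IsUnit Z1.det := isUnit_iff_ne_zero.2 h0
  have e : Zᵀ * Z = Z1ᵀ * (1 + (Z2 * Z1⁻¹)ᵀ * (Z2 * Z1⁻¹)) * Z1 := by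
    rw [hdec, Matrix.mul_add, Matrix.add_mul, mul_one]
    congr 1
    have : Z1ᵀ * ((Z2 * Z1⁻¹)ᵀ * (Z2 * Z1⁻¹)) * Z1 = (Z2 * (Z1⁻¹ * Z1))ᵀ * (Z2 * (Z1⁻¹ * Z1)) := by
      simp only [Matrix.transpose_mul, Matrix.mul_assoc]
    rw [this, Matrix.nonsing_inv_mul _ hu, Matrix.mul_one]
  have h1 := one_le_det_one_add (C := (Z2 * Z1⁻¹)ᵀ * (Z2 * Z1⁻¹))
    (Matrix.posSemidef_conjTranspose_mul_self _)
  rw [e, Matrix.det_mul, Matrix.det_mul, Matrix.det_transpose]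
  nlinarith [sq_nonneg Z1.det]

/-- Parallel-sum bound for the diagonal of `(B + W⁻¹)⁻¹`. -/
lemma parallel_diag {p : ℕ} {W : Matrix (Fin p) (Fin p) ℝ} (hW : W.PosDef) (b : Fin p → ℝ)
    (hb : ∀ i, 0 < b i) (i : Fin p) :
    ((Matrix.diagonal b + W⁻¹)⁻¹) i i ≤ (b i + W i i) / (1 + b i) ^ 2 := by
  have hBpd : (Matrix.diagonal b).PosDef := Matrix.PosDef.diagonal hb
  have hP : (Matrix.diagonal b + W⁻¹).PosDef := hBpd.add hW.inv
  have huW : IsUnit W.det := hW.det_pos.ne'.isUnit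
  have huP : IsUnit (Matrix.diagonal b + W⁻¹).det := hP.det_pos.ne'.isUnit
  set P := Matrix.diagonal b + W⁻¹ with hPdef
  set e : Fin p → ℝ := Pi.single i 1
  set q : Fin p → ℝ := P⁻¹ *ᵥ e with hq
  have hPq : P *ᵥ q = e := by
    rw [hq, Matrix.mulVec_mulVec, Matrix.mul_nonsing_inv _ huP, Matrix.one_mulVec]
  have hqi : q i = P⁻¹ i i := by simp [hq, e]
  have hs : 0 < 1 + b i := by linarith [hb i]
  set s := (1 + b i)⁻¹ with hsdef
  -- quadratic form in W⁻¹
  have h1 : 0 ≤ (s • (W *ᵥ e) - q) ⬝ᵥ (W⁻¹ *ᵥ (s • (W *ᵥ e) - q)) := by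
    simpa using hW.inv.posSemidef.dotProduct_mulVec_nonneg (s • (W *ᵥ e) - q)
  have h2 : W⁻¹ *ᵥ (s • (W *ᵥ e) - q) = s • e - W⁻¹ *ᵥ q := by
    rw [Matrix.mulVec_sub, Matrix.mulVec_smul, Matrix.mulVec_mulVec,
      Matrix.nonsing_inv_mul _ huW, Matrix.one_mulVec]
  have hWe : (W *ᵥ e) ⬝ᵥ (W⁻¹ *ᵥ q) = e ⬝ᵥ q := by
    have hWt : Wᵀ = W := hW.1
    have : W *ᵥ e = e ᵥ* W := by rw [← Matrix.mulVec_transpose, hWt]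
    rw [this, ← Matrix.dotProduct_mulVec, Matrix.mulVec_mulVec, Matrix.mul_nonsing_inv _ huW,
      Matrix.one_mulVec]
  have heq : e ⬝ᵥ q = q i := by simp [e]
  have hee : (W *ᵥ e) ⬝ᵥ e = W i i := by simp [e]
  have hqe : q ⬝ᵥ e = q i := by simp [e]
  rw [h2] at h1
  simp only [sub_dotProduct, dotProduct_sub, smul_dotProduct, dotProduct_smul, hWe, heq, hee, hqe,
    smul_eq_mul] at h1
  -- total form
  have h3 : q ⬝ᵥ (Matrix.diagonal b *ᵥ q) + q ⬝ᵥ (W⁻¹ *ᵥ q) = q i := by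
    rw [← dotProduct_add, ← Matrix.add_mulVec, ← hPdef, hPq, hqe]
  have h4 : b i * q i ^ 2 ≤ q ⬝ᵥ (Matrix.diagonal b *ᵥ q) := by
    simp only [dotProduct, Matrix.mulVec_diagonal]
    refine le_trans (le_of_eq ?_) (Finset.single_le_sum (f := fun j => q j * (b j * q j))
      (fun j _ => ?_) (Finset.mem_univ i))
    · ring
    · have := mul_nonneg (hb j).le (sq_nonneg (q j)); nlinarith
  rw [← hqi, div_eq_mul_inv, ← inv_pow, ← hsdef]
  have hsb : s * (1 + b i) = 1 := inv_mul_cancel₀ hs.ne'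
  have h5 : 0 ≤ b i * (q i - s) ^ 2 := mul_nonneg (hb i).le (sq_nonneg _)
  have h6 : s * b i = 1 - s := by linarith
  have h7 : b i * (q i - s) ^ 2 = b i * q i ^ 2 - 2 * (s * b i) * q i + b i * s ^ 2 := by ring
  rw [h6] at h7
  nlinarith

lemma tangent {p : ℕ} {W : Matrix (Fin p) (Fin p) ℝ} (hW : W.PosDef) (b : Fin p → ℝ)
    (hb : ∀ i, 0 < b i) :
    ∑ i, (Real.log (b i + 1) - (W i i - 1) / (1 + b i)) ≤
      Real.log (Matrix.diagonal b + W⁻¹).det := by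
  have hBpd : (Matrix.diagonal b).PosDef := Matrix.PosDef.diagonal hb
  have hP : (Matrix.diagonal b + W⁻¹).PosDef := hBpd.add hW.inv
  have hpos : ∀ i, 0 < b i + 1 := fun i => by linarith [hb i]
  set S : Matrix (Fin p) (Fin p) ℝ := Matrix.diagonal fun i => Real.sqrt (b i + 1) with hS
  have hSpd : S.PosDef := Matrix.PosDef.diagonal fun i => Real.sqrt_pos.2 (hpos i)
  set Q := (Matrix.diagonal b + W⁻¹)⁻¹ with hQ
  have hM : (S * Q * S).PosDef := by
    have h := hP.inv.posSemidef.conjTranspose_mul_mul_same S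
    rw [hSpd.1.eq] at h
    rw [h.posDef_iff_det_ne_zero, Matrix.det_mul, Matrix.det_mul]
    exact mul_ne_zero (mul_ne_zero hSpd.det_pos.ne' hP.inv.det_pos.ne') hSpd.det_pos.ne'
  have h1 := log_det_le_trace hM
  have hdet : (S * Q * S).det = (∏ i, (b i + 1)) * (Matrix.diagonal b + W⁻¹).det⁻¹ := by
    rw [Matrix.det_mul, Matrix.det_mul, hQ, Matrix.det_nonsing_inv, Ring.inverse_eq_inv', hS,
      Matrix.det_diagonal, mul_right_comm, ← Finset.prod_mul_distrib]
    congr 1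
    exact Finset.prod_congr rfl fun i _ => Real.mul_self_sqrt (hpos i).le
  have htr : (S * Q * S).trace ≤ ∑ i, (b i + W i i) / (1 + b i) := by
    rw [Matrix.trace]
    refine Finset.sum_le_sum fun i _ => ?_
    have h2 := parallel_diag hW b hb i
    rw [Matrix.diag_apply, hS, Matrix.mul_diagonal, Matrix.diagonal_mul]
    have h3 : Real.sqrt (b i + 1) * Q i i * Real.sqrt (b i + 1) = (b i + 1) * Q i i := by
      rw [mul_right_comm, Real.mul_self_sqrt (hpos i).le]
    rw [h3]
    calc (b i + 1) * Q i i ≤ (b i + 1) * ((b i + W i i) / (1 + b i) ^ 2) :=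
          mul_le_mul_of_nonneg_left h2 (hpos i).le
      _ = _ := by have := hpos i; have : 1 + b i ≠ 0 := by linarith
                  field_simp; ring
  rw [hdet, Real.log_mul (Finset.prod_pos fun i _ => hpos i).ne' (inv_ne_zero hP.det_pos.ne'),
    Real.log_inv, Real.log_prod (fun i _ => (hpos i).ne')] at h1
  have h5 : ∑ i, (Real.log (b i + 1) - (W i i - 1) / (1 + b i)) =
      ∑ i, Real.log (b i + 1) - ∑ i, (b i + W i i) / (1 + b i) + p := by
    have : (p : ℝ) = ∑ i : Fin p, (1 : ℝ) := by simp
    rw [this, ← Finset.sum_sub_distrib, ← Finset.sum_add_distrib]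
    refine Finset.sum_congr rfl fun i _ => ?_
    have : 1 + b i ≠ 0 := by linarith [hpos i]
    field_simp; ring
  linarith

lemma log_det_add_inv {p : ℕ} {W : Matrix (Fin p) (Fin p) ℝ} (hW : W.PosDef) (b : Fin p → ℝ)
    (hb : ∀ i, 0 < b i) :
    Real.log (Matrix.diagonal b + W⁻¹).det =
      Real.log (Matrix.diagonal b * W + 1).det - Real.log W.det ∧
    Real.log (Matrix.diagonal b * W + 1).det ≤ ∑ i, b i * W i i := by
  have hBpd : (Matrix.diagonal b).PosDef := Matrix.PosDef.diagonal hb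
  have hP : (Matrix.diagonal b + W⁻¹).PosDef := hBpd.add hW.inv
  have huW : IsUnit W.det := hW.det_pos.ne'.isUnit
  have e1 : (Matrix.diagonal b + W⁻¹) * W = Matrix.diagonal b * W + 1 := by
    rw [Matrix.add_mul, Matrix.nonsing_inv_mul _ huW]
  constructor
  · rw [← e1, Matrix.det_mul, Real.log_mul hP.det_pos.ne' hW.det_pos.ne']; ring
  · set S : Matrix (Fin p) (Fin p) ℝ := Matrix.diagonal fun i => Real.sqrt (b i) with hS
    have hSpd : S.PosDef := Matrix.PosDef.diagonal fun i => Real.sqrt_pos.2 (hb i)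
    have hSS : S * S = Matrix.diagonal b := by
      rw [hS, Matrix.diagonal_mul_diagonal]
      congr 1; ext i; exact Real.mul_self_sqrt (hb i).le
    have hM : (S * W * S).PosSemidef := by
      have h := hW.posSemidef.conjTranspose_mul_mul_same S
      rwa [hSpd.1.eq] at h
    have e2 : (Matrix.diagonal b * W + 1).det = (1 + S * W * S).det := by
      rw [Matrix.mul_assoc, Matrix.det_one_add_mul_comm, ← hSS, add_comm]
      rw [Matrix.mul_assoc, Matrix.det_one_add_mul_comm]
      rw [Matrix.mul_assoc, Matrix.det_one_add_mul_comm, Matrix.mul_assoc]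
    rw [e2]
    refine (log_det_le_trace (Matrix.PosDef.one.add_posSemidef hM)).trans ?_
    rw [Matrix.trace_add, Matrix.trace_one]
    simp only [Fintype.card_fin, add_sub_cancel_left]
    rw [Matrix.trace]
    refine Finset.sum_le_sum fun i _ => ?_
    rw [Matrix.diag_apply, hS, Matrix.mul_diagonal, Matrix.diagonal_mul, mul_right_comm,
      Real.mul_self_sqrt (hb i).le]

/-- The normalized Gram matrix of a family of entries. -/
noncomputable def gramW (n p : ℕ) (x : Fin n × Fin p → ℝ) : Matrix (Fin p) (Fin p) ℝ :=
  (n : ℝ)⁻¹ • ((Matrix.of fun i j => x (i, j))ᵀ * (Matrix.of fun i j => x (i, j)))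

lemma continuous_gramW (n p : ℕ) : Continuous (gramW n p) := by
  unfold gramW
  have : Continuous fun x : Fin n × Fin p → ℝ =>
      (Matrix.of fun i j => x (i, j) : Matrix (Fin n) (Fin p) ℝ) := by fun_prop
  have h2 := this.matrix_transpose.matrix_mul this
  exact h2.const_smul ((n : ℝ)⁻¹)

lemma integral_gramW_diag {n p : ℕ} (hn : 0 < n) (i : Fin p) :
    Integrable (fun x => gramW n p x i i) (Measure.pi fun _ => gaussianReal 0 1) ∧
    ∫ x, gramW n p x i i ∂(Measure.pi fun _ => gaussianReal 0 1) = 1 := by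
  have hsq : Integrable (fun t : ℝ => t ^ 2) (gaussianReal 0 1) :=
    (memLp_id_gaussianReal (μ := 0) (v := 1) 2).integrable_sq
  have hsq1 : ∫ t, t ^ 2 ∂(gaussianReal 0 1) = 1 := by
    have h := variance_fun_id_gaussianReal (μ := 0) (v := 1)
    rw [variance_of_integral_eq_zero (by fun_prop) (by simp)] at h
    simpa using h
  have hk : ∀ ij : Fin n × Fin p, Integrable (fun x : Fin n × Fin p → ℝ => x ij ^ 2)
      (Measure.pi fun _ => gaussianReal 0 1) ∧
      ∫ x : Fin n × Fin p → ℝ, x ij ^ 2 ∂(Measure.pi fun _ => gaussianReal 0 1) = 1 := by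
    intro ij
    have hmp := measurePreserving_eval (fun _ : Fin n × Fin p => gaussianReal 0 1) ij
    constructor
    · exact hmp.integrable_comp_of_integrable hsq
    · have h := integral_map (μ := Measure.pi fun _ : Fin n × Fin p => gaussianReal 0 1)
        (f := fun t : ℝ => t ^ 2) hmp.measurable.aemeasurable
        (by fun_prop)
      rw [hmp.map_eq, hsq1] at h
      exact h.symm
  have hW : ∀ x, gramW n p x i i = (n : ℝ)⁻¹ * ∑ k, x (k, i) ^ 2 := by
    intro x
    simp [gramW, Matrix.mul_apply, pow_two]
  simp only [hW]
  refine ⟨(integrable_finsetSum _ fun k _ => (hk (k, i)).1).const_mul _, ?_⟩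
  rw [integral_const_mul, integral_finsetSum _ fun k _ => (hk (k, i)).1]
  simp only [(hk _).2]
  have : (n : ℝ) ≠ 0 := by positivity
  simp [this]

lemma main_aux {n p : ℕ} (hn : 0 < n) (hpn : p ≤ n) (b : Fin p → ℝ) (hb : ∀ i, 0 < b i) :
    Integrable (fun x => Real.log (Matrix.diagonal b + (gramW n p x)⁻¹).det)
      (Measure.pi fun _ => gaussianReal 0 1) ∧
    ∑ i, Real.log (b i + 1) ≤ ∫ x, Real.log (Matrix.diagonal b + (gramW n p x)⁻¹).det
      ∂(Measure.pi fun _ => gaussianReal 0 1) := by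
  obtain ⟨r, rfl⟩ := Nat.exists_eq_add_of_le hpn
  set γ : Measure (Fin (p + r) × Fin p → ℝ) := Measure.pi fun _ => gaussianReal 0 1 with hγ
  have hn' : (0 : ℝ) < ((p + r : ℕ) : ℝ) := by exact_mod_cast hn
  set D : (Fin (p + r) × Fin p → ℝ) → ℝ := fun x =>
    Matrix.det (Matrix.of fun i j => x (Fin.castAdd r i, id j)) with hD
  have hDmeas : Measurable fun x => negLog (D x) := by
    apply measurable_negLog.comp
    apply Continuous.measurable
    apply Continuous.matrix_det
    fun_prop
  have hfin : ∫⁻ x, negLog (D x) ∂γ < ⊤ :=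
    lintegral_minor p (Fin.castAdd r) id (Fin.castAdd_injective p r) Function.injective_id
  have hae : ∀ᵐ x ∂γ, D x ≠ 0 := by
    filter_upwards [ae_lt_top hDmeas hfin.ne] with x hx h0
    simp [negLog, h0] at hx
  have hge : ∀ x, D x ^ 2 ≤
      ((Matrix.of fun i j => x (i, j))ᵀ * (Matrix.of fun (i : Fin (p + r)) (j : Fin p) =>
        x (i, j))).det := fun x =>
    det_sq_le_det_gram (Matrix.of fun (i : Fin (p + r)) (j : Fin p) => x (i, j))
  have hdetW : ∀ x, (gramW (p + r) p x).det = ((p + r : ℕ) : ℝ)⁻¹ ^ p *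
      ((Matrix.of fun i j => x (i, j))ᵀ * (Matrix.of fun (i : Fin (p + r)) (j : Fin p) =>
        x (i, j))).det := by
    intro x
    rw [gramW, Matrix.det_smul, Fintype.card_fin]
  have hpd : ∀ x, D x ≠ 0 → (gramW (p + r) p x).PosDef := by
    intro x hx
    have hps : (gramW (p + r) p x).PosSemidef :=
      (Matrix.posSemidef_conjTranspose_mul_self _).smul (by positivity)
    rw [hps.posDef_iff_det_ne_zero, hdetW]
    have := hge x
    have : 0 < D x ^ 2 := by positivity
    exact mul_ne_zero (by positivity) (by linarith)
  have hdiag := fun i : Fin p => integral_gramW_diag (n := p + r) hn i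
  rw [← hγ] at hdiag
  have hd1 : ∀ i : Fin p, Integrable (fun x => (gramW (p + r) p x i i - 1) / (1 + b i)) γ :=
    fun i => ((hdiag i).1.sub (integrable_const _)).div_const _
  have hl1 : ∀ i : Fin p, Integrable (fun x => Real.log (b i + 1) -
      (gramW (p + r) p x i i - 1) / (1 + b i)) γ :=
    fun i => (integrable_const _).sub (hd1 i)
  have hlow : Integrable (fun x => ∑ i, (Real.log (b i + 1) -
      (gramW (p + r) p x i i - 1) / (1 + b i))) γ :=
    integrable_finsetSum _ fun i _ => hl1 i
  have hupp : Integrable (fun x => (∑ i, b i * gramW (p + r) p x i i) +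
      (p * Real.log ((p + r : ℕ) : ℝ) + 2 * (negLog (D x)).toReal)) γ :=
    (integrable_finsetSum _ fun i _ => (hdiag i).1.const_mul _).add
      ((integrable_const _).add
        ((integrable_toReal_of_lintegral_ne_top hDmeas.aemeasurable hfin.ne).const_mul _))
  have hint : Integrable (fun x => Real.log (Matrix.diagonal b + (gramW (p + r) p x)⁻¹).det) γ := by
    refine integrable_of_le_of_le ?_ ?_ ?_ hlow hupp
    · have hm : Measurable fun x => Real.log (Matrix.diagonal b * gramW (p + r) p x + 1).det -
          Real.log (gramW (p + r) p x).det := by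
        have hc := continuous_gramW (p + r) p
        refine (Real.measurable_log.comp (Continuous.measurable ?_)).sub
          (Real.measurable_log.comp (Continuous.measurable ?_))
        · exact ((continuous_const.matrix_mul hc).add continuous_const).matrix_det
        · exact hc.matrix_det
      refine hm.aestronglyMeasurable.congr ?_
      filter_upwards [hae] with x hx
      exact (log_det_add_inv (hpd x hx) b hb).1.symm
    · filter_upwards [hae] with x hx
      exact tangent (hpd x hx) b hb
    · filter_upwards [hae] with x hx
      obtain ⟨h1, h2⟩ := log_det_add_inv (hpd x hx) b hb
      rw [h1]
      have hD2 : 0 < D x ^ 2 := by positivity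
      have h3 : -Real.log (gramW (p + r) p x).det ≤
          p * Real.log ((p + r : ℕ) : ℝ) + 2 * (negLog (D x)).toReal := by
        rw [hdetW, Real.log_mul (by positivity) (by linarith [hge x]), Real.log_pow, Real.log_inv]
        have h4 := Real.log_le_log hD2 (hge x)
        rw [Real.log_pow] at h4
        have h5 : -Real.log (D x) ≤ (negLog (D x)).toReal := by
          simp only [negLog, hx, if_false]
          rw [ENNReal.toReal_ofReal']
          exact le_max_left _ _
        push_cast at h4 ⊢
        linarith
      linarith
  refine ⟨hint, ?_⟩
  calc ∑ i, Real.log (b i + 1) = ∫ x, ∑ i, (Real.log (b i + 1) -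
      (gramW (p + r) p x i i - 1) / (1 + b i)) ∂γ := by
        rw [integral_finsetSum _ fun i _ => hl1 i]
        refine Finset.sum_congr rfl fun i _ => ?_
        rw [integral_sub (integrable_const _) (hd1 i), integral_div,
          integral_sub (hdiag i).1 (integrable_const _), (hdiag i).2]
        simp
    _ ≤ _ := by
        refine integral_mono_ae hlow hint ?_
        filter_upwards [hae] with x hx
        exact tangent (hpd x hx) b hb

/-- for a `(K-1) × p` random matrix `Z` with i.i.d. standard normal entries,
`W = (1/(K-1)) Zᵀ Z` (a central Wishart matrix), `K - 1 > p ≥ 1`, and a positive definite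
diagonal matrix `B = diag (b 1, …, b p)`, the expectation `E[log det (B + W⁻¹)]` is bounded
below by the infimum of `∑ i, log (b i + 1/x i)` over the feasible set
`{x : ∑ i, x i = p, ∀ i, (1 - √(p/(K-1)))² ≤ x i ≤ (1 + √(p/(K-1)))² + 1/(K-1)}`. -/
theorem expectation_logdet_diagonal_add_inv_wishart_ge (K p : ℕ) (hp : 1 ≤ p) (hKp : p < K - 1)
    {Ω : Type*} [MeasurableSpace Ω] (μ : Measure Ω) [IsProbabilityMeasure μ]
    (Z : Ω → Matrix (Fin (K - 1)) (Fin p) ℝ)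
    (hZ : Measure.map (fun ω (ij : Fin (K - 1) × Fin p) => Z ω ij.1 ij.2) μ
        = Measure.pi fun _ : Fin (K - 1) × Fin p => gaussianReal 0 1)
    (b : Fin p → ℝ) (hb : ∀ i, 0 < b i) :
    ∫ ω, Real.log
        ((Matrix.diagonal b + ((((K : ℝ) - 1)⁻¹ • ((Z ω)ᵀ * Z ω))⁻¹ :
          Matrix (Fin p) (Fin p) ℝ)).det) ∂μ
      ≥ sInf {y : ℝ | ∃ x : Fin p → ℝ,
          (∑ i, x i = (p : ℝ)) ∧
          (∀ i, (1 - Real.sqrt ((p : ℝ) / ((K : ℝ) - 1))) ^ 2 ≤ x i ∧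
            x i ≤ (1 + Real.sqrt ((p : ℝ) / ((K : ℝ) - 1))) ^ 2 + 1 / ((K : ℝ) - 1)) ∧
          y = ∑ i, Real.log (b i + 1 / x i)} := by
  have hK1 : 1 ≤ K := by omega
  have hKn : (K : ℝ) - 1 = ((K - 1 : ℕ) : ℝ) := by push_cast [Nat.cast_sub hK1]; ring
  have hKpos : (0 : ℝ) < (K : ℝ) - 1 := by
    rw [hKn]; exact_mod_cast (by omega : 0 < K - 1)
  have hpR : (p : ℝ) < (K : ℝ) - 1 := by rw [hKn]; exact_mod_cast hKp
  obtain ⟨hint, hle⟩ := main_aux (n := K - 1) (by omega) hKp.le b hb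
  have haem : AEMeasurable (fun ω (ij : Fin (K - 1) × Fin p) => Z ω ij.1 ij.2) μ := by
    by_contra h
    rw [Measure.map_of_not_aemeasurable h] at hZ
    exact IsProbabilityMeasure.ne_zero _ hZ.symm
  have heq : ∫ ω, Real.log
        ((Matrix.diagonal b + ((((K : ℝ) - 1)⁻¹ • ((Z ω)ᵀ * Z ω))⁻¹ :
          Matrix (Fin p) (Fin p) ℝ)).det) ∂μ =
      ∫ x, Real.log (Matrix.diagonal b + (gramW (K - 1) p x)⁻¹).det
        ∂(Measure.pi fun _ => gaussianReal 0 1) := by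
    rw [← hZ, integral_map haem (by rw [hZ]; exact hint.1)]
    rw [hKn]
    rfl
  rw [heq, ge_iff_le]
  refine le_trans (csInf_le ?_ ?_) hle
  · refine ⟨∑ i, Real.log (b i), ?_⟩
    rintro y ⟨x, -, hx, rfl⟩
    refine Finset.sum_le_sum fun i _ => Real.log_le_log (hb i) ?_
    have h0 : 0 ≤ x i := (sq_nonneg _).trans (hx i).1
    have : 0 ≤ 1 / x i := by positivity
    linarith
  · refine ⟨fun _ => 1, by simp, fun i => ?_, by simp⟩
    have hs0 : 0 ≤ Real.sqrt ((p : ℝ) / ((K : ℝ) - 1)) := Real.sqrt_nonneg _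
    have hs1 : Real.sqrt ((p : ℝ) / ((K : ℝ) - 1)) ≤ 1 := by
      rw [Real.sqrt_le_one]
      exact (div_le_one hKpos).2 hpR.le
    have h3 : 0 ≤ 1 / ((K : ℝ) - 1) := by positivity
    constructor <;> nlinarith
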